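/- Fix integers k ≥ 1, q ≥ 1, N ≥ 1, lists L_1, …, L_q with each L_j a nonempty subset of {1, …, k}, and targets η : {1, …, k} → ℕ. Let F be the graph consisting of N pairwise disjoint paths A_1, …, A_N, each with vertex sequence a_1, …, a_q, where vertex a_j of every path has admissible color set L_j. Consider the directed network H with nodes s, t, and nodes u_{j,i}, v_{j,i} for each j ∈ {1, …, q} and i ∈ L_j, and arcs: (s, u_{1,i}) for each i ∈ L_1; (u_{j,i}, v_{j,i}) for each j and i ∈ L_j; (v_{j,i}, u_{j+1,a}) for each j < q, i ∈ L_j, a ∈ L_{j+1} with a ≠ i; and (v_{q,i}, t) for each i ∈ L_q; every arc has capacity N. Then F admits a proper coloring in which the j-th vertex of each path receives a color from L_j and each color i is used exactly η(i) times in total, if and only if there is a function x from the arcs of H to the natural numbers satisfying: flow conservation at every node other than s and t; total flow out of s and total flow into t both equal to N; for every color i, the sum of x over the arcs (u_{j,i}, v_{j,i}) with j ∈ {1, …, q} and i ∈ L_j equals η(i); and 0 ≤ x(e) ≤ N for every arc e. -/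

import Mathlib

/-- The graph consisting of `N` pairwise disjoint paths, each with `q` vertices: vertex
`(a, j)` is the `j`-th vertex of the `a`-th path, and edges join consecutive vertices of
the same path. -/
def pathsGraph (N q : ℕ) : SimpleGraph (Fin N × Fin q) :=
  SimpleGraph.fromRel fun p p' => p.1 = p'.1 ∧ p.2.val + 1 = p'.2.val

/-- The nodes of the flow network `H`: a source, a sink, and nodes `up j i`, `vp j i` for
each position `j` and color `i`. -/
inductive PNode (k q : ℕ) where
  | src : PNode k q
  | snk : PNode k q
  | up : Fin q → Fin k → PNode k q
  | vp : Fin q → Fin k → PNode k q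
  deriving DecidableEq, Fintype

/-- The arcs of the flow network `H`: `(src, up 0 i)` for `i ∈ L 0`; `(up j i, vp j i)` for
`i ∈ L j`; `(vp j i, up (j+1) a)` for `i ∈ L j`, `a ∈ L (j+1)`, `a ≠ i`; and
`(vp (q-1) i, snk)` for `i ∈ L (q-1)`. -/
def PArc (k q : ℕ) (L : Fin q → Finset (Fin k)) : Set (PNode k q × PNode k q) :=
  {e | (∃ (j : Fin q) (i : Fin k), j.val = 0 ∧ i ∈ L j ∧ e = (.src, .up j i)) ∨
       (∃ (j : Fin q) (i : Fin k), i ∈ L j ∧ e = (.up j i, .vp j i)) ∨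
       (∃ (j j' : Fin q) (i a : Fin k), j.val + 1 = j'.val ∧ i ∈ L j ∧ a ∈ L j' ∧
          a ≠ i ∧ e = (.vp j i, .up j' a)) ∨
       (∃ (j : Fin q) (i : Fin k), j.val = q - 1 ∧ i ∈ L j ∧ e = (.vp j i, .snk))}

/-! A proper list coloring of a single path is the same thing as a directed path from `src` to
`snk` in the network, namely the network of the singleton lists of its colors. Adding up the unit
flows along the `N` paths of a coloring gives a flow of value `N`. Conversely, an integral flow of
positive value can be followed greedily from `src` to `snk` along arcs carrying flow; removing one
unit along the path so found lowers the value by one, and since the network is acyclic nothing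
remains once the value is zero. Hence integral flows of value `N` are exactly the sums of `N` such
unit flows, and the flow through `(up j i, vp j i)` counts the paths whose `j`-th color is `i`. -/

section Flow

variable {V : Type*} [Fintype V]

/-- Integral flows of value `m` from `s` to `t` along the arcs in `A`, without capacities: used to
treat superposition and removal of flows independently of the network at hand. A flow is a function
on all pairs of nodes that vanishes off `A`, and its value is the total flow out of `s` and into
`t`; flow into `s` and out of `t` is not subtracted. -/
structure IsFlow (s t : V) (A : Set (V × V)) (m : ℕ) (x : V × V → ℕ) : Prop where
  eq_zero_of_notMem : ∀ e, e ∉ A → x e = 0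
  conservation : ∀ z, z ≠ s → z ≠ t → ∑ y, x (y, z) = ∑ y, x (z, y)
  sum_source : ∑ y, x (s, y) = m
  sum_sink : ∑ y, x (y, t) = m

namespace IsFlow

variable {s t : V} {A B : Set (V × V)} {m m' : ℕ} {x x' : V × V → ℕ}

theorem mono (hx : IsFlow s t A m x) (hAB : A ⊆ B) : IsFlow s t B m x :=
  { hx with eq_zero_of_notMem := fun e he => hx.eq_zero_of_notMem e fun hA => he (hAB hA) }

theorem mem_of_ne_zero (hx : IsFlow s t A m x) {e : V × V} (he : x e ≠ 0) : e ∈ A :=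
  not_imp_comm.1 (hx.eq_zero_of_notMem e) he

theorem sum {ι : Type*} [Fintype ι] {m : ι → ℕ} {x : ι → V × V → ℕ}
    (hx : ∀ a, IsFlow s t A (m a) (x a)) : IsFlow s t A (∑ a, m a) (∑ a, x a) where
  eq_zero_of_notMem e he := by simp [(hx _).eq_zero_of_notMem e he]
  conservation z hs ht := by
    simp only [Finset.sum_apply]
    rw [Finset.sum_comm, Finset.sum_comm (γ := V)]
    exact Finset.sum_congr rfl fun a _ => (hx a).conservation z hs ht
  sum_source := by
    simp only [Finset.sum_apply]
    rw [Finset.sum_comm]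
    exact Finset.sum_congr rfl fun a _ => (hx a).sum_source
  sum_sink := by
    simp only [Finset.sum_apply]
    rw [Finset.sum_comm]
    exact Finset.sum_congr rfl fun a _ => (hx a).sum_sink

theorem of_add (hadd : IsFlow s t A (m + m') (x + x')) (hx : IsFlow s t A m x) :
    IsFlow s t A m' x' where
  eq_zero_of_notMem e he := (Nat.add_eq_zero_iff.1 (hadd.eq_zero_of_notMem e he)).2
  conservation z hs ht := by
    have h := hadd.conservation z hs ht
    simp only [Pi.add_apply, Finset.sum_add_distrib, hx.conservation z hs ht] at h
    exact Nat.add_left_cancel h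
  sum_source := by
    have h := hadd.sum_source
    simp only [Pi.add_apply, Finset.sum_add_distrib, hx.sum_source] at h
    exact Nat.add_left_cancel h
  sum_sink := by
    have h := hadd.sum_sink
    simp only [Pi.add_apply, Finset.sum_add_distrib, hx.sum_sink] at h
    exact Nat.add_left_cancel h

theorem exists_in_ne_zero_iff_exists_out (hx : IsFlow s t A m x) {z : V} (hs : z ≠ s) (ht : z ≠ t) :
    (∃ y, x (y, z) ≠ 0) ↔ ∃ y, x (z, y) ≠ 0 := by
  simpa using (congrArg (· ≠ 0) (hx.conservation z hs ht)).to_iff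

theorem eq_zero_of_rank_lt (hx : IsFlow s t A 0 x) {rank : V → ℕ}
    (hrank : ∀ y z, (y, z) ∈ A → rank y < rank z) (ht : ∀ z, (t, z) ∉ A) : x = 0 := by
  suffices h : ∀ r y, rank y = r → ∀ z, x (y, z) = 0 from funext fun e => h _ e.1 rfl e.2
  intro r
  induction r using Nat.strong_induction_on with
  | _ r ih =>
    rintro y rfl z
    by_contra hyz
    have hys : y ≠ s := by
      rintro rfl
      exact hyz (Finset.sum_eq_zero_iff.1 hx.sum_source z (Finset.mem_univ z))
    have hyt : y ≠ t := by
      rintro rfl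
      exact ht z (hx.mem_of_ne_zero hyz)
    obtain ⟨w, hwy⟩ := (hx.exists_in_ne_zero_iff_exists_out hys hyt).2 ⟨z, hyz⟩
    exact hwy (ih _ (hrank w y (hx.mem_of_ne_zero hwy)) w rfl y)

end IsFlow

end Flow

theorem exists_fin_chain {n : ℕ} {α : Type*} {P : Fin (n + 1) → α → Prop}
    {R : Fin n → α → α → Prop} (hzero : ∃ a, P 0 a)
    (hsucc : ∀ j a, P j.castSucc a → ∃ b, R j a b ∧ P j.succ b) :
    ∃ f : Fin (n + 1) → α, (∀ j, P j (f j)) ∧ ∀ j : Fin n, R j (f j.castSucc) (f j.succ) := by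
  obtain ⟨a, ha⟩ := hzero
  choose next hR hP using hsucc
  let f : ∀ j, {b // P j b} :=
    Fin.induction ⟨a, ha⟩ fun j b => ⟨next j b b.2, hP j b b.2⟩
  exact ⟨fun j => f j, fun j => (f j).2, fun j => hR j _ (f j.castSucc).2⟩

theorem forall_fin_val_add_one_eq_iff {n : ℕ} {P : Fin (n + 1) → Fin (n + 1) → Prop} :
    (∀ j j', j.val + 1 = j'.val → P j j') ↔ ∀ j : Fin n, P j.castSucc j.succ := by
  refine ⟨fun h j => h _ _ (by simp), fun h j j' hj => ?_⟩
  obtain ⟨l, rfl, rfl⟩ : ∃ l : Fin n, j = l.castSucc ∧ j' = l.succ :=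
    ⟨⟨j, by omega⟩, rfl, Fin.ext hj.symm⟩
  exact h l

section Network

variable {k q n : ℕ}

theorem monotone_PArc : Monotone (PArc k q) := by
  rintro L L' hL e (⟨j, i, hj, hi, he⟩ | ⟨j, i, hi, he⟩ | ⟨j, j', i, a, hj, hi, ha, hne, he⟩ |
    ⟨j, i, hj, hi, he⟩)
  · exact .inl ⟨j, i, hj, hL j hi, he⟩
  · exact .inr (.inl ⟨j, i, hL j hi, he⟩)
  · exact .inr (.inr (.inl ⟨j, j', i, a, hj, hL j hi, hL j' ha, hne, he⟩))
  · exact .inr (.inr (.inr ⟨j, i, hj, hL j hi, he⟩))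

/-- The number of arcs on any path from `src` to a node; it witnesses that the network is
acyclic. -/
def PNode.rank : PNode k q → ℕ
  | .src => 0
  | .up j _ => 2 * j + 1
  | .vp j _ => 2 * j + 2
  | .snk => 2 * q + 1

theorem PNode.rank_lt_of_mem_PArc {L : Fin q → Finset (Fin k)} {y z : PNode k q}
    (h : (y, z) ∈ PArc k q L) : y.rank < z.rank := by
  rcases h with ⟨j, i, hj, -, h⟩ | ⟨j, i, -, h⟩ | ⟨j, j', i, a, hj, -, -, -, h⟩ | ⟨j, i, -, -, h⟩
    <;> obtain ⟨rfl, rfl⟩ := Prod.mk.inj h <;> simp only [PNode.rank] <;> omega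

section Arcs

variable {L : Fin q → Finset (Fin k)} {z : PNode k q}

theorem up_left_mem_PArc {j : Fin q} {i : Fin k} :
    (.up j i, z) ∈ PArc k q L ↔ i ∈ L j ∧ z = .vp j i := by
  simp [PArc]

theorem vp_right_mem_PArc {j : Fin q} {i : Fin k} :
    (z, .vp j i) ∈ PArc k q L ↔ i ∈ L j ∧ z = .up j i := by
  simp [PArc]

theorem snk_left_notMem_PArc : (.snk, z) ∉ PArc k q L := by
  simp [PArc]

end Arcs

section ConsecutiveArcs

variable {L : Fin (n + 1) → Finset (Fin k)} {z : PNode k (n + 1)}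

theorem src_left_mem_PArc :
    (.src, z) ∈ PArc k (n + 1) L ↔ ∃ i ∈ L 0, z = .up 0 i := by
  simp [PArc, Fin.val_eq_zero_iff]

theorem vp_castSucc_left_mem_PArc {j : Fin n} {i : Fin k} :
    (.vp j.castSucc i, z) ∈ PArc k (n + 1) L ↔
      i ∈ L j.castSucc ∧ ∃ a ∈ L j.succ, a ≠ i ∧ z = .up j.succ a := by
  have hsucc (l : Fin (n + 1)) : j.val + 1 = l.val ↔ l = j.succ := by
    rw [Fin.ext_iff, Fin.val_succ, eq_comm]
  simp [PArc, hsucc, j.isLt.ne]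

theorem vp_last_left_mem_PArc {i : Fin k} :
    (.vp (Fin.last n) i, z) ∈ PArc k (n + 1) L ↔ i ∈ L (Fin.last n) ∧ z = .snk := by
  have hlast (l : Fin (n + 1)) : n + 1 ≠ l.val := l.isLt.ne'
  simp [PArc, hlast]

theorem up_zero_right_mem_PArc {i : Fin k} :
    (z, .up 0 i) ∈ PArc k (n + 1) L ↔ i ∈ L 0 ∧ z = .src := by
  simp [PArc]

theorem up_succ_right_mem_PArc {j : Fin n} {i : Fin k} :
    (z, .up j.succ i) ∈ PArc k (n + 1) L ↔
      i ∈ L j.succ ∧ ∃ a ∈ L j.castSucc, i ≠ a ∧ z = .vp j.castSucc a := by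
  have hcast (l : Fin (n + 1)) : l.val = j.val ↔ l = j.castSucc := by
    rw [Fin.ext_iff, Fin.val_castSucc]
  simp only [PArc, Set.mem_ofPred_eq, Prod.mk.injEq, PNode.up.injEq]
  grind

theorem snk_right_mem_PArc :
    (z, .snk) ∈ PArc k (n + 1) L ↔ ∃ i ∈ L (Fin.last n), z = .vp (Fin.last n) i := by
  have hlast (l : Fin (n + 1)) : l.val = n ↔ l = Fin.last n := by
    rw [Fin.ext_iff, Fin.val_last]
  simp [PArc, hlast]

end ConsecutiveArcs

/-- Proper list colorings of a single path: `ψ j` is the color of its `j`-th vertex. -/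
def IsPathColoring (L : Fin q → Finset (Fin k)) (ψ : Fin q → Fin k) : Prop :=
  (∀ j, ψ j ∈ L j) ∧ ∀ j j' : Fin q, j.val + 1 = j'.val → ψ j ≠ ψ j'

theorem adj_ne_and_mem_iff_forall_isPathColoring {N : ℕ} {L : Fin q → Finset (Fin k)}
    {φ : Fin N × Fin q → Fin k} :
    ((∀ p p', (pathsGraph N q).Adj p p' → φ p ≠ φ p') ∧ ∀ p, φ p ∈ L p.2) ↔
      ∀ a, IsPathColoring L fun j => φ (a, j) := by
  constructor
  · rintro ⟨hφ, hφL⟩ a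
    refine ⟨fun j => hφL (a, j), fun j j' h => hφ _ _ ?_⟩
    refine (SimpleGraph.fromRel_adj _ _ _).2 ⟨fun h' => ?_, .inl ⟨rfl, h⟩⟩
    simp [(Prod.mk.inj h').2] at h
  · refine fun h => ⟨?_, fun p => (h p.1).1 p.2⟩
    rintro ⟨a, j⟩ ⟨a', j'⟩ hadj
    obtain ⟨-, ⟨rfl : a = a', hj⟩ | ⟨rfl : a' = a, hj⟩⟩ :=
      (SimpleGraph.fromRel_adj _ _ _).1 hadj
    · exact (h a).2 j j' hj
    · exact ((h a').2 j' j hj).symm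

open Classical in
/-- The unit flow along the directed path from `src` to `snk` determined by the colors `ψ`. If `ψ`
is proper, the arcs of that path are all the arcs of the network of the singleton lists `{ψ j}`;
otherwise some of its arcs are missing. -/
noncomputable def pathFlow (ψ : Fin q → Fin k) (e : PNode k q × PNode k q) : ℕ :=
  if e ∈ PArc k q fun j => {ψ j} then 1 else 0

theorem pathFlow_le_one (ψ : Fin q → Fin k) (e : PNode k q × PNode k q) : pathFlow ψ e ≤ 1 := by
  rw [pathFlow]
  split_ifs <;> simp

theorem sum_pathFlow_le_card {ι : Type*} [Fintype ι] (ψ : ι → Fin q → Fin k)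
    (e : PNode k q × PNode k q) : (∑ a, pathFlow (ψ a)) e ≤ Fintype.card ι := by
  simpa using Finset.sum_le_card_nsmul Finset.univ _ 1 fun a _ => pathFlow_le_one (ψ a) e

theorem pathFlow_up_vp (ψ : Fin q → Fin k) (j : Fin q) (i : Fin k) :
    pathFlow ψ (.up j i, .vp j i) = if ψ j = i then 1 else 0 := by
  simp [pathFlow, up_left_mem_PArc, eq_comm]

theorem sum_up_vp_sum_pathFlow {ι : Type*} [Fintype ι] {L : Fin q → Finset (Fin k)}
    {ψ : ι → Fin q → Fin k} (hψ : ∀ a j, ψ a j ∈ L j) (i : Fin k) :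
    ∑ j with i ∈ L j, (∑ a, pathFlow (ψ a)) (.up j i, .vp j i) =
      (Finset.univ.filter fun p : ι × Fin q => ψ p.1 p.2 = i).card := by
  simp only [Finset.sum_apply, pathFlow_up_vp, Finset.card_filter, Fintype.sum_prod_type_right]
  refine Finset.sum_filter_of_ne fun j _ hj => ?_
  obtain ⟨a, -, ha⟩ := Finset.exists_ne_zero_of_sum_ne_zero hj
  obtain rfl : ψ a j = i := by simpa using ha
  exact hψ a j

theorem pathFlow_conservation {ψ : Fin (n + 1) → Fin k}
    (hψ : ∀ j : Fin n, ψ j.castSucc ≠ ψ j.succ) {z : PNode k (n + 1)} (hs : z ≠ .src)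
    (ht : z ≠ .snk) : ∑ y, pathFlow ψ (y, z) = ∑ y, pathFlow ψ (z, y) := by
  simp only [pathFlow]
  cases z with
  | src => exact absurd rfl hs
  | snk => exact absurd rfl ht
  | up j i =>
    by_cases hi : i = ψ j <;> cases j using Fin.cases <;>
      simp [up_left_mem_PArc, up_zero_right_mem_PArc, up_succ_right_mem_PArc, hi, (hψ _).symm]
  | vp j i =>
    by_cases hi : i = ψ j <;> cases j using Fin.lastCases <;>
      simp [vp_right_mem_PArc, vp_last_left_mem_PArc, vp_castSucc_left_mem_PArc, hi, (hψ _).symm]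

theorem IsPathColoring.isFlow_pathFlow {L : Fin (n + 1) → Finset (Fin k)} {ψ : Fin (n + 1) → Fin k}
    (hψ : IsPathColoring L ψ) : IsFlow .src .snk (PArc k (n + 1) L) 1 (pathFlow ψ) := by
  have hsub : (PArc k (n + 1) fun j => {ψ j}) ⊆ PArc k (n + 1) L :=
    monotone_PArc fun j => Finset.singleton_subset_iff.2 (hψ.1 j)
  refine IsFlow.mono ?_ hsub
  exact
    { eq_zero_of_notMem := fun e he => if_neg he
      conservation := fun z => pathFlow_conservation fun j => hψ.2 _ _ (by simp)
      sum_source := by simp [pathFlow, src_left_mem_PArc]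
      sum_sink := by simp [pathFlow, snk_right_mem_PArc] }

theorem pathFlow_le {ψ : Fin (n + 1) → Fin k} {x : PNode k (n + 1) × PNode k (n + 1) → ℕ}
    (hfirst : x (.src, .up 0 (ψ 0)) ≠ 0) (hthrough : ∀ j, x (.up j (ψ j), .vp j (ψ j)) ≠ 0)
    (hnext : ∀ j : Fin n, x (.vp j.castSucc (ψ j.castSucc), .up j.succ (ψ j.succ)) ≠ 0)
    (hlast : x (.vp (Fin.last n) (ψ (Fin.last n)), .snk) ≠ 0) : pathFlow ψ ≤ x := by
  intro e
  rw [pathFlow]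
  split_ifs with he
  · rw [Nat.one_le_iff_ne_zero]
    rcases he with ⟨j, i, hj, hi, rfl⟩ | ⟨j, i, hi, rfl⟩ | ⟨j, j', i, i', hj, hi, hi', -, rfl⟩ |
      ⟨j, i, hj, hi, rfl⟩ <;> obtain rfl := Finset.mem_singleton.1 hi
    · obtain rfl : j = 0 := Fin.ext hj
      exact hfirst
    · exact hthrough j
    · obtain rfl := Finset.mem_singleton.1 hi'
      exact (forall_fin_val_add_one_eq_iff
        (P := fun j j' => x (.vp j (ψ j), .up j' (ψ j')) ≠ 0)).2 hnext j j' hj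
    · obtain rfl : j = Fin.last n := Fin.ext hj
      exact hlast
  · exact Nat.zero_le _

section Decomposition

variable {L : Fin (n + 1) → Finset (Fin k)} {N : ℕ}
  {x : PNode k (n + 1) × PNode k (n + 1) → ℕ}

theorem exists_colors_through_ne_zero
    (hx : IsFlow .src .snk (PArc k (n + 1) L) (N + 1) x) :
    ∃ ψ : Fin (n + 1) → Fin k, (∀ j, x (.up j (ψ j), .vp j (ψ j)) ≠ 0) ∧
      ∀ j : Fin n, x (.vp j.castSucc (ψ j.castSucc), .up j.succ (ψ j.succ)) ≠ 0 := by
  have hup {j i y} (h : x (y, .up j i) ≠ 0) : x (.up j i, .vp j i) ≠ 0 := by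
    obtain ⟨z, hz⟩ := (hx.exists_in_ne_zero_iff_exists_out (by simp) (by simp)).1 ⟨y, h⟩
    obtain ⟨-, rfl⟩ := up_left_mem_PArc.1 (hx.mem_of_ne_zero hz)
    exact hz
  refine exists_fin_chain (P := fun j i => x (.up j i, .vp j i) ≠ 0)
    (R := fun j i i' => x (.vp j.castSucc i, .up j.succ i') ≠ 0) ?_ fun j i hi => ?_
  · obtain ⟨y, -, hy⟩ := Finset.exists_ne_zero_of_sum_ne_zero
      (hx.sum_source.trans_ne N.succ_ne_zero)
    obtain ⟨i, -, rfl⟩ := src_left_mem_PArc.1 (hx.mem_of_ne_zero hy)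
    exact ⟨i, hup hy⟩
  · obtain ⟨z, hz⟩ := (hx.exists_in_ne_zero_iff_exists_out (by simp) (by simp)).1 ⟨_, hi⟩
    obtain ⟨-, i', -, -, rfl⟩ := vp_castSucc_left_mem_PArc.1 (hx.mem_of_ne_zero hz)
    exact ⟨i', hz, hup hz⟩

theorem exists_pathFlow_le (hx : IsFlow .src .snk (PArc k (n + 1) L) (N + 1) x) :
    ∃ ψ, IsPathColoring L ψ ∧ pathFlow ψ ≤ x := by
  obtain ⟨ψ, hthrough, hnext⟩ := exists_colors_through_ne_zero hx
  have hfirst : x (.src, .up 0 (ψ 0)) ≠ 0 := by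
    obtain ⟨y, hy⟩ := (hx.exists_in_ne_zero_iff_exists_out (by simp) (by simp)).2 ⟨_, hthrough 0⟩
    obtain ⟨-, rfl⟩ := up_zero_right_mem_PArc.1 (hx.mem_of_ne_zero hy)
    exact hy
  have hlast : x (.vp (Fin.last n) (ψ (Fin.last n)), .snk) ≠ 0 := by
    obtain ⟨z, hz⟩ :=
      (hx.exists_in_ne_zero_iff_exists_out (by simp) (by simp)).1 ⟨_, hthrough (Fin.last n)⟩
    obtain ⟨-, rfl⟩ := vp_last_left_mem_PArc.1 (hx.mem_of_ne_zero hz)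
    exact hz
  refine ⟨ψ, ⟨fun j => ?_, ?_⟩, pathFlow_le hfirst hthrough hnext hlast⟩
  · exact (up_left_mem_PArc.1 (hx.mem_of_ne_zero (hthrough j))).1
  · rw [forall_fin_val_add_one_eq_iff (P := fun j j' => ψ j ≠ ψ j')]
    intro j heq
    obtain ⟨-, i, -, hne, hi⟩ := vp_castSucc_left_mem_PArc.1 (hx.mem_of_ne_zero (hnext j))
    exact hne ((PNode.up.inj hi).2.symm.trans heq.symm)

theorem isFlow_iff_exists_sum_pathFlow :
    IsFlow .src .snk (PArc k (n + 1) L) N x ↔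
      ∃ ψ : Fin N → Fin (n + 1) → Fin k,
        (∀ a, IsPathColoring L (ψ a)) ∧ x = ∑ a, pathFlow (ψ a) := by
  constructor
  · intro hx
    induction N generalizing x with
    | zero =>
      refine ⟨Fin.elim0, Fin.rec0, ?_⟩
      rw [Fin.sum_univ_zero]
      exact hx.eq_zero_of_rank_lt (fun _ _ => PNode.rank_lt_of_mem_PArc)
        fun _ => snk_left_notMem_PArc
    | succ N ih =>
      obtain ⟨ψ₀, hψ₀, hle⟩ := exists_pathFlow_le hx
      obtain ⟨x', rfl⟩ := exists_add_of_le hle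
      rw [add_comm N] at hx
      obtain ⟨ψ, hψ, rfl⟩ := ih (hx.of_add hψ₀.isFlow_pathFlow)
      exact ⟨Fin.cons ψ₀ ψ, Fin.cases hψ₀ hψ, by simp [Fin.sum_univ_succ]⟩
  · rintro ⟨ψ, hψ, rfl⟩
    simpa using IsFlow.sum fun a => (hψ a).isFlow_pathFlow

end Decomposition

end Network

/-- The collection `F` of `N` disjoint paths with `q` vertices each, where the `j`-th
vertex of every path has admissible color set `L j`, admits a proper coloring respecting
the lists and using each color `i` exactly `η i` times, if and only if the flow network
`H` admits a feasible integral flow of value `N` (with all capacities `N`) in which, for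
every color `i`, the flow through the arcs `(up j i, vp j i)` sums to `η i`. -/
theorem stmt15 (k q N : ℕ) (hk : 1 ≤ k) (hq : 1 ≤ q) (hN : 1 ≤ N)
    (L : Fin q → Finset (Fin k)) (hL : ∀ j : Fin q, (L j).Nonempty)
    (η : Fin k → ℕ) :
    (∃ φ : Fin N × Fin q → Fin k,
      (∀ p p' : Fin N × Fin q, (pathsGraph N q).Adj p p' → φ p ≠ φ p') ∧
      (∀ p : Fin N × Fin q, φ p ∈ L p.2) ∧
      (∀ i : Fin k, (Finset.univ.filter fun p : Fin N × Fin q => φ p = i).card = η i)) ↔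
    (∃ x : PNode k q × PNode k q → ℕ,
      (∀ e, e ∉ PArc k q L → x e = 0) ∧
      (∀ e, x e ≤ N) ∧
      (∀ z : PNode k q, z ≠ .src → z ≠ .snk →
        ∑ y : PNode k q, x (y, z) = ∑ y : PNode k q, x (z, y)) ∧
      (∑ y : PNode k q, x (.src, y)) = N ∧
      (∑ y : PNode k q, x (y, .snk)) = N ∧
      (∀ i : Fin k,
        ∑ j ∈ Finset.univ.filter (fun j : Fin q => i ∈ L j), x (.up j i, .vp j i) = η i)) := by
  obtain ⟨n, rfl⟩ : ∃ n, q = n + 1 := Nat.exists_eq_add_of_le' hq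
  constructor
  · rintro ⟨φ, hφ, hφL, hη⟩
    have hψ := adj_ne_and_mem_iff_forall_isPathColoring.1 ⟨hφ, hφL⟩
    have hx := isFlow_iff_exists_sum_pathFlow.2 ⟨_, hψ, rfl⟩
    exact ⟨_, hx.eq_zero_of_notMem,
      fun e => (sum_pathFlow_le_card _ e).trans_eq (Fintype.card_fin N),
      hx.conservation, hx.sum_source, hx.sum_sink,
      fun i => (sum_up_vp_sum_pathFlow (fun a => (hψ a).1) i).trans (hη i)⟩
  · rintro ⟨x, hx, -, hcons, hsrc, hsnk, hη⟩
    obtain ⟨ψ, hψ, rfl⟩ := isFlow_iff_exists_sum_pathFlow.1 ⟨hx, hcons, hsrc, hsnk⟩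
    obtain ⟨hadj, hmem⟩ :=
      adj_ne_and_mem_iff_forall_isPathColoring (φ := fun p => ψ p.1 p.2).2 hψ
    exact ⟨_, hadj, hmem, fun i => (sum_up_vp_sum_pathFlow (fun a => (hψ a).1) i).symm.trans (hη i)⟩
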